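/- Let n ≥ 1, let 0 < ε < 1, 0 < α < 1 − ε and T > 1 + α − ε. Every classical solution u of the wave equation on [0,T]×closure(Ω), where Ω is the open unit ball of ℝⁿ, with Dirichlet boundary conditions, whose initial data are supported in the closed ball of radius α and which satisfies ∂ₜu(t,x) = 0 for all t ∈ (0,T) and all x with 1 − ε < |x| < 1, vanishes identically on [0,T]×closure(Ω). -/

import Mathlib

open MeasureTheory

/-- Partial derivative in time of a function of (time, space). -/
noncomputable def pdt {n : ℕ} (u : ℝ → EuclideanSpace ℝ (Fin n) → ℝ) :
    ℝ → EuclideanSpace ℝ (Fin n) → ℝ := fun t x => deriv (fun s => u s x) t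

/-- The Euclidean Laplacian of `f` at `x`, as the sum of the second derivatives
along the coordinate directions. -/
noncomputable def lap {n : ℕ} (f : EuclideanSpace ℝ (Fin n) → ℝ)
    (x : EuclideanSpace ℝ (Fin n)) : ℝ :=
  ∑ i, iteratedFDeriv ℝ 2 f x ![EuclideanSpace.single i 1, EuclideanSpace.single i 1]


lemma aux_ibp1 {n : ℕ} (f g : EuclideanSpace ℝ (Fin n) → ℝ) (e : EuclideanSpace ℝ (Fin n))
    (hf : ContDiff ℝ 1 f) (hg : ContDiff ℝ 1 g) (hc : HasCompactSupport f) :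
    ∫ x, fderiv ℝ f x e * g x = - ∫ x, f x * fderiv ℝ g x e := by
  have hf' : Continuous (fun x => fderiv ℝ f x e) :=
    (hf.continuous_fderiv (by simp)).clm_apply continuous_const
  have hg' : Continuous (fun x => fderiv ℝ g x e) :=
    (hg.continuous_fderiv (by simp)).clm_apply continuous_const
  have hcf' : HasCompactSupport (fun x => fderiv ℝ f x e) := hc.fderiv_apply ℝ e
  rw [integral_mul_fderiv_eq_neg_fderiv_mul_of_integrable, neg_neg]
  · exact (hf'.mul hg.continuous).integrable_of_hasCompactSupport hcf'.mul_right
  · exact (hf.continuous.mul hg').integrable_of_hasCompactSupport hc.mul_right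
  · exact (hf.continuous.mul hg.continuous).integrable_of_hasCompactSupport hc.mul_right
  · exact fun x _ => hf.differentiable (by simp) x
  · exact fun x _ => hg.differentiable (by simp) x

lemma aux_fderiv_plane {n : ℕ} (p : ℝ → ℝ) (hp : ContDiff ℝ 1 p) (ω e : EuclideanSpace ℝ (Fin n))
    (t : ℝ) (x : EuclideanSpace ℝ (Fin n)) :
    fderiv ℝ (fun x => p (inner ℝ ω x - t)) x e = inner ℝ ω e * deriv p (inner ℝ ω x - t) := by
  have h1 : HasDerivAt p (deriv p (inner ℝ ω x - t)) (inner ℝ ω x - t) :=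
    (hp.differentiable (by simp) _).hasDerivAt
  have h2 : HasFDerivAt (fun x : EuclideanSpace ℝ (Fin n) => inner ℝ ω x - t) (innerSL ℝ ω) x :=
    ((innerSL ℝ ω).hasFDerivAt).sub_const t
  have h3 := h1.comp_hasFDerivAt x h2
  have h4 := h3.fderiv
  simp only [Function.comp_def] at h4
  rw [h4]
  simp [mul_comm]

lemma aux_contDiff_plane {n : ℕ} {k : WithTop ℕ∞} (p : ℝ → ℝ) (hp : ContDiff ℝ k p)
    (ω : EuclideanSpace ℝ (Fin n)) (t : ℝ) :
    ContDiff ℝ k (fun x : EuclideanSpace ℝ (Fin n) => p (inner ℝ ω x - t)) :=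
  hp.comp (((innerSL ℝ ω).contDiff).sub contDiff_const)

lemma aux_lap {n : ℕ} (g : EuclideanSpace ℝ (Fin n) → ℝ) (hg : ContDiff ℝ 2 g)
    (hc : HasCompactSupport g) (p : ℝ → ℝ) (hp : ContDiff ℝ 2 p)
    (ω : EuclideanSpace ℝ (Fin n)) (hω : ‖ω‖ = 1) (t : ℝ) :
    ∫ x, lap g x * p (inner ℝ ω x - t) = ∫ x, g x * deriv (deriv p) (inner ℝ ω x - t) := by
  have hp1 : ContDiff ℝ 1 p := hp.of_le (by norm_num)
  have hp' : ContDiff ℝ 1 (deriv p) := ((contDiff_succ_iff_deriv (n := 1)).1 hp).2.2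
  have hp'' : Continuous (deriv (deriv p)) := hp'.continuous_deriv (by simp)
  have hg1 : ContDiff ℝ 1 (fderiv ℝ g) := hg.fderiv_right (by norm_num)
  have hpl : Continuous (fun x : EuclideanSpace ℝ (Fin n) => p (inner ℝ ω x - t)) :=
    (aux_contDiff_plane p hp1 ω t).continuous
  have key : ∀ e : EuclideanSpace ℝ (Fin n),
      Integrable (fun x => fderiv ℝ (fderiv ℝ g) x e e * p (inner ℝ ω x - t)) ∧
      ∫ x, fderiv ℝ (fderiv ℝ g) x e e * p (inner ℝ ω x - t)
        = (inner ℝ ω e)^2 * ∫ x, g x * deriv (deriv p) (inner ℝ ω x - t) := by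
    intro e
    have hge : ContDiff ℝ 1 (fun x => fderiv ℝ g x e) := hg1.clm_apply contDiff_const
    have hce : HasCompactSupport (fun x => fderiv ℝ g x e) := hc.fderiv_apply ℝ e
    have heq : ∀ x, fderiv ℝ (fderiv ℝ g) x e e = fderiv ℝ (fun y => fderiv ℝ g y e) x e := by
      intro x
      rw [fderiv_clm_apply (hg1.differentiable (by simp) x) (by fun_prop)]
      simp
    simp_rw [heq]
    constructor
    · refine Continuous.integrable_of_hasCompactSupport ?_ (hce.fderiv_apply ℝ e).mul_right
      exact ((hge.continuous_fderiv (by simp)).clm_apply continuous_const).mul hpl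
    rw [aux_ibp1 _ _ e hge (aux_contDiff_plane p hp1 ω t) hce]
    simp_rw [aux_fderiv_plane p hp1]
    rw [aux_ibp1 g (fun x => inner ℝ ω e * deriv p (inner ℝ ω x - t)) e (hg.of_le (by norm_num))
      (contDiff_const.mul (aux_contDiff_plane _ hp' ω t)) hc, neg_neg]
    rw [← integral_const_mul]
    congr 1
    ext x
    rw [fderiv_const_mul ((aux_contDiff_plane _ hp' ω t).differentiable (by simp) x)]
    simp [aux_fderiv_plane _ hp']
    ring
  unfold lap
  simp_rw [iteratedFDeriv_two_apply, Finset.sum_mul]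
  simp only [Matrix.cons_val_zero, Matrix.cons_val_one]
  rw [integral_finsetSum _ (fun i _ => (key _).1)]
  simp_rw [(key _).2]
  rw [← Finset.sum_mul]
  have : ∑ i, (inner ℝ ω (EuclideanSpace.single i (1:ℝ)))^2 = 1 := by
    have := EuclideanSpace.norm_sq_eq ω
    rw [hω] at this
    simp [EuclideanSpace.inner_single_right] at this ⊢
    exact this.symm
  rw [this, one_mul]

noncomputable def auxQ {n : ℕ} (u v : ℝ → EuclideanSpace ℝ (Fin n) → ℝ) (p : ℝ → ℝ)
    (ω : EuclideanSpace ℝ (Fin n)) (t : ℝ) : ℝ :=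
  ∫ x, (v t x * p (inner ℝ ω x - t) + u t x * deriv p (inner ℝ ω x - t))

lemma aux_slice {n : ℕ} {T : ℝ} {f : ℝ → EuclideanSpace ℝ (Fin n) → ℝ}
    (hf : ContinuousOn (Function.uncurry f) (Set.Icc 0 T ×ˢ Set.univ)) {t : ℝ}
    (ht : t ∈ Set.Icc 0 T) : Continuous (f t) := by
  have : ContinuousOn (fun x => Function.uncurry f (t, x)) Set.univ :=
    hf.comp (by fun_prop) (fun x _ => ⟨ht, trivial⟩)
  exact continuousOn_univ.1 this

lemma aux_cs {n : ℕ} {r : ℝ} {f : EuclideanSpace ℝ (Fin n) → ℝ} (hf : ∀ x, r < ‖x‖ → f x = 0) :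
    HasCompactSupport f := by
  refine HasCompactSupport.intro (isCompact_closedBall 0 r) (fun x hx => hf x ?_)
  simpa using hx

lemma aux_cons {n : ℕ} (u v w : ℝ → EuclideanSpace ℝ (Fin n) → ℝ) (r T : ℝ)
    (hu : ContinuousOn (Function.uncurry u) (Set.Icc 0 T ×ˢ Set.univ))
    (hv : ContinuousOn (Function.uncurry v) (Set.Icc 0 T ×ˢ Set.univ))
    (hw : ContinuousOn (Function.uncurry w) (Set.Icc 0 T ×ˢ Set.univ))
    (zu : ∀ t ∈ Set.Icc 0 T, ∀ x, r < ‖x‖ → u t x = 0)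
    (zv : ∀ t ∈ Set.Icc 0 T, ∀ x, r < ‖x‖ → v t x = 0)
    (zw : ∀ t ∈ Set.Icc 0 T, ∀ x, r < ‖x‖ → w t x = 0)
    (du : ∀ t ∈ Set.Ioo 0 T, ∀ x, HasDerivAt (fun s => u s x) (v t x) t)
    (dv : ∀ t ∈ Set.Ioo 0 T, ∀ x, HasDerivAt (fun s => v s x) (w t x) t)
    (hl : ∀ t ∈ Set.Ioo 0 T, ContDiff ℝ 2 (u t) ∧ ∀ x, w t x = lap (u t) x)
    (p : ℝ → ℝ) (hp : ContDiff ℝ 2 p) (ω : EuclideanSpace ℝ (Fin n)) (hω : ‖ω‖ = 1)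
    (a b : ℝ) (ha : a ∈ Set.Icc 0 T) (hb : b ∈ Set.Icc 0 T) :
    auxQ u v p ω a = auxQ u v p ω b := by
  have hp1 : ContDiff ℝ 1 p := hp.of_le (by norm_num)
  have hp' : ContDiff ℝ 1 (deriv p) := ((contDiff_succ_iff_deriv (n := 1)).1 hp).2.2
  have hp'' : Continuous (deriv (deriv p)) := hp'.continuous_deriv (by simp)
  have hpc := hp1.continuous
  have hpc' := hp'.continuous
  have hpl : ∀ q : ℝ → ℝ, Continuous q → ContinuousOn
      (fun y : ℝ × EuclideanSpace ℝ (Fin n) => q (inner ℝ ω y.2 - y.1))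
      (Set.Icc 0 T ×ˢ Set.univ) := by
    intro q hq
    apply Continuous.continuousOn
    fun_prop
  set F : ℝ → EuclideanSpace ℝ (Fin n) → ℝ := fun t x =>
    v t x * p (inner ℝ ω x - t) + u t x * deriv p (inner ℝ ω x - t) with hF
  set G : ℝ → EuclideanSpace ℝ (Fin n) → ℝ := fun t x =>
    w t x * p (inner ℝ ω x - t) - u t x * deriv (deriv p) (inner ℝ ω x - t) with hG
  have cF : ContinuousOn (Function.uncurry F) (Set.Icc 0 T ×ˢ Set.univ) :=
    (hv.mul (hpl p hpc)).add (hu.mul (hpl _ hpc'))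
  have cG : ContinuousOn (Function.uncurry G) (Set.Icc 0 T ×ˢ Set.univ) :=
    (hw.mul (hpl p hpc)).sub (hu.mul (hpl _ hp''))
  have zF : ∀ t ∈ Set.Icc 0 T, ∀ x, r < ‖x‖ → F t x = 0 := by
    intro t ht x hx
    simp [hF, zu t ht x hx, zv t ht x hx]
  have zG : ∀ t ∈ Set.Icc 0 T, ∀ x, r < ‖x‖ → G t x = 0 := by
    intro t ht x hx
    simp [hG, zu t ht x hx, zw t ht x hx]
  have cQ : ContinuousOn (auxQ u v p ω) (Set.Icc 0 T) := by
    refine continuousOn_integral_of_compact_support (isCompact_closedBall 0 r) cF ?_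
    intro t x ht hx
    exact zF t ht x (by simpa using hx)
  obtain ⟨C, hC⟩ := ((isCompact_Icc (a := (0:ℝ)) (b := T)).prod
    (isCompact_closedBall (0 : EuclideanSpace ℝ (Fin n)) r)).exists_bound_of_continuousOn
    (cG.mono (Set.prod_mono le_rfl (Set.subset_univ _)))
  have dQ : ∀ t ∈ Set.Ioo 0 T, HasDerivAt (auxQ u v p ω) 0 t := by
    intro t ht
    have htI := Set.Ioo_subset_Icc_self ht
    have h := (hasDerivAt_integral_of_dominated_loc_of_deriv_le (μ := volume) (F := F) (F' := G)
      (bound := (Metric.closedBall (0 : EuclideanSpace ℝ (Fin n)) r).indicator (fun _ => C))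
      (s := Set.Ioo 0 T) (x₀ := t) (Ioo_mem_nhds ht.1 ht.2) ?_ ?_ ?_ ?_ ?_ ?_).2
    · have h0 : ∫ x, G t x = 0 := by
        have e := aux_lap (u t) (hl t ht).1 (aux_cs (zu t htI)) p hp ω hω t
        simp_rw [← (hl t ht).2] at e
        simp only [hG]
        rw [integral_sub, e, sub_self]
        · refine Continuous.integrable_of_hasCompactSupport ?_ (aux_cs (zw t htI)).mul_right
          exact (aux_slice hw htI).mul (by fun_prop)
        · refine Continuous.integrable_of_hasCompactSupport ?_ (aux_cs (zu t htI)).mul_right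
          exact (aux_slice hu htI).mul (by fun_prop)
      rw [h0] at h
      exact h
    · filter_upwards [Icc_mem_nhds ht.1 ht.2] with s hs
      exact (aux_slice cF hs).aestronglyMeasurable
    · exact (aux_slice cF htI).integrable_of_hasCompactSupport (aux_cs (zF t htI))
    · exact (aux_slice cG htI).aestronglyMeasurable
    · refine Filter.Eventually.of_forall (fun x s hs => ?_)
      by_cases hx : x ∈ Metric.closedBall (0 : EuclideanSpace ℝ (Fin n)) r
      · rw [Set.indicator_of_mem hx]
        exact hC (s, x) ⟨Set.Ioo_subset_Icc_self hs, hx⟩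
      · rw [Set.indicator_of_notMem hx, zG s (Set.Ioo_subset_Icc_self hs) x (by simpa using hx)]
        simp
    · rw [integrable_indicator_iff measurableSet_closedBall]
      exact integrableOn_const (isCompact_closedBall _ _).measure_ne_top
    · refine Filter.Eventually.of_forall (fun x s hs => ?_)
      have hi : HasDerivAt (fun s : ℝ => inner ℝ ω x - s) (-1) s := by
        simpa using (hasDerivAt_id s).const_sub (inner ℝ ω x)
      have h1 := ((hp1.differentiable (by simp) (inner ℝ ω x - s)).hasDerivAt).comp s hi
      have h2 := ((hp'.differentiable (by simp) (inner ℝ ω x - s)).hasDerivAt).comp s hi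
      have h3 := ((dv s hs x).mul h1).add ((du s hs x).mul h2)
      refine h3.congr_deriv ?_
      simp only [hG, Function.comp_apply]
      ring
  have mono : ∀ a b, a ∈ Set.Icc 0 T → b ∈ Set.Icc 0 T → a < b →
      auxQ u v p ω a = auxQ u v p ω b := by
    intro a b ha hb hab
    obtain ⟨c, hc, h⟩ := exists_hasDerivAt_eq_slope (auxQ u v p ω) (fun _ => 0) hab
      (cQ.mono (Set.Icc_subset_Icc ha.1 hb.2))
      (fun x hx => dQ x ⟨ha.1.trans_lt hx.1, hx.2.trans_le hb.2⟩)
    have : b - a ≠ 0 := by linarith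
    field_simp at h
    linarith
  rcases lt_trichotomy a b with h | h | h
  · exact mono a b ha hb h
  · rw [h]
  · exact (mono b a hb ha h).symm

/-- A continuous compactly supported function whose plane averages against smooth derivatives
vanish is zero. -/
lemma aux_fourier {n : ℕ} (hn : 1 ≤ n) (r : ℝ) (f : EuclideanSpace ℝ (Fin n) → ℝ)
    (hf : Continuous f) (zf : ∀ x, r < ‖x‖ → f x = 0)
    (h : ∀ p : ℝ → ℝ, ContDiff ℝ 2 p → ∀ ω : EuclideanSpace ℝ (Fin n), ‖ω‖ = 1 →
      ∫ x, f x * deriv p (inner ℝ ω x) = 0) : f = 0 := by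
  have hcs := aux_cs zf
  let g : EuclideanSpace ℝ (Fin n) → ℂ := fun x => (f x : ℂ)
  have hgc : Continuous g := Complex.continuous_ofReal.comp hf
  have hgi : Integrable g := (hf.integrable_of_hasCompactSupport hcs).ofReal
  have hz : ∀ ξ : EuclideanSpace ℝ (Fin n), ξ ≠ 0 → FourierTransform.fourier g ξ = 0 := by
    intro ξ hξ
    have hnξ : ‖ξ‖ ≠ 0 := norm_ne_zero_iff.2 hξ
    set k : ℝ := 2 * Real.pi * ‖ξ‖ with hk
    have hk0 : k ≠ 0 := by positivity
    set ω : EuclideanSpace ℝ (Fin n) := (‖ξ‖)⁻¹ • ξ with hω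
    have hω1 : ‖ω‖ = 1 := by
      rw [hω, norm_smul, norm_inv, norm_norm, inv_mul_cancel₀ hnξ]
    have e : ∀ x, 2 * Real.pi * inner ℝ x ξ = k * inner ℝ ω x := by
      intro x
      rw [hω, real_inner_smul_left, real_inner_comm, hk]
      field_simp
    have hs := h (fun s => Real.sin (k * s)) (by fun_prop) ω hω1
    have hc := h (fun s => Real.cos (k * s)) (by fun_prop) ω hω1
    have ds : ∀ s, deriv (fun s => Real.sin (k * s)) s = Real.cos (k * s) * k := fun s => by
      have := ((Real.hasDerivAt_sin (k * s)).comp s ((hasDerivAt_id s).const_mul k)).deriv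
      simpa [Function.comp_def] using this
    have dc : ∀ s, deriv (fun s => Real.cos (k * s)) s = -Real.sin (k * s) * k := fun s => by
      have := ((Real.hasDerivAt_cos (k * s)).comp s ((hasDerivAt_id s).const_mul k)).deriv
      simpa [Function.comp_def] using this
    simp_rw [ds, ← mul_assoc] at hs
    simp_rw [dc, ← mul_assoc] at hc
    rw [integral_mul_const] at hs hc
    have hs := (mul_eq_zero.1 hs).resolve_right hk0
    have hc := (mul_eq_zero.1 hc).resolve_right hk0
    rw [Real.fourier_eq']
    have i1 : Integrable (fun x => f x * Real.cos (k * inner ℝ ω x)) :=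
      (hf.mul (by fun_prop)).integrable_of_hasCompactSupport hcs.mul_right
    have i2 : Integrable (fun x => f x * -Real.sin (k * inner ℝ ω x)) :=
      (hf.mul (by fun_prop)).integrable_of_hasCompactSupport hcs.mul_right
    have : ∀ x, Complex.exp (((-2 * Real.pi * inner ℝ x ξ : ℝ) : ℂ) * Complex.I) • g x
        = ((f x * Real.cos (k * inner ℝ ω x) : ℝ) : ℂ)
          + ((f x * -Real.sin (k * inner ℝ ω x) : ℝ) : ℂ) * Complex.I := by
      intro x
      have e' : -2 * Real.pi * inner ℝ x ξ = -(k * inner ℝ ω x) := by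
        rw [← e x]; ring
      rw [e', Complex.exp_mul_I, ← Complex.ofReal_cos, ← Complex.ofReal_sin, Real.cos_neg,
        Real.sin_neg]
      simp only [g, smul_eq_mul]
      push_cast
      ring
    simp_rw [this]
    rw [integral_add i1.ofReal (i2.ofReal.mul_const _), integral_mul_const, integral_complex_ofReal,
      integral_complex_ofReal, hs, hc]
    simp
  have : Nonempty (Fin n) := ⟨⟨0, hn⟩⟩
  have hae : FourierTransform.fourier g =ᵐ[volume] 0 := by
    have : ∀ᵐ ξ : EuclideanSpace ℝ (Fin n), ξ ≠ 0 := by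
      simp [ae_iff]
    filter_upwards [this] with ξ hξ
    exact hz ξ hξ
  have hinv := hgc.fourierInv_fourier_eq hgi ((integrable_zero _ _ _).congr hae.symm)
  ext x
  have hx := congrFun hinv x
  rw [Real.fourierInv_eq] at hx
  have : ∫ v, Real.fourierChar (inner ℝ v x) • FourierTransform.fourier g v = 0 := by
    rw [integral_eq_zero_of_ae]
    filter_upwards [hae] with v hv
    simp [hv]
  rw [this] at hx
  simpa [g] using hx.symm

lemma aux_deriv_zero {p : ℝ → ℝ} {β : ℝ} (h : ∀ s, s < β → p s = 0) {s : ℝ} (hs : s < β) :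
    deriv p s = 0 := by
  have : p =ᶠ[nhds s] fun _ => 0 := by
    filter_upwards [Iio_mem_nhds hs] with y hy
    exact h y hy
  rw [this.deriv_eq]
  simp

lemma aux_core {n : ℕ} (hn : 1 ≤ n) (u v w : ℝ → EuclideanSpace ℝ (Fin n) → ℝ) (r T α : ℝ)
    (hα : 0 < α) (hr : 0 < r) (hT : r + α < T)
    (hu : ContinuousOn (Function.uncurry u) (Set.Icc 0 T ×ˢ Set.univ))
    (hv : ContinuousOn (Function.uncurry v) (Set.Icc 0 T ×ˢ Set.univ))
    (hw : ContinuousOn (Function.uncurry w) (Set.Icc 0 T ×ˢ Set.univ))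
    (zu : ∀ t ∈ Set.Icc 0 T, ∀ x, r < ‖x‖ → u t x = 0)
    (zv : ∀ t ∈ Set.Icc 0 T, ∀ x, r < ‖x‖ → v t x = 0)
    (zw : ∀ t ∈ Set.Icc 0 T, ∀ x, r < ‖x‖ → w t x = 0)
    (du : ∀ t ∈ Set.Ioo 0 T, ∀ x, HasDerivAt (fun s => u s x) (v t x) t)
    (dv : ∀ t ∈ Set.Ioo 0 T, ∀ x, HasDerivAt (fun s => v s x) (w t x) t)
    (hl : ∀ t ∈ Set.Ioo 0 T, ContDiff ℝ 2 (u t) ∧ ∀ x, w t x = lap (u t) x)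
    (h0 : ∀ x, α ≤ ‖x‖ → u 0 x = 0) :
    ∀ t ∈ Set.Icc 0 T, u t = 0 := by
  have m0 : (0:ℝ) ∈ Set.Icc 0 T := ⟨le_rfl, by linarith⟩
  have mT : T ∈ Set.Icc 0 T := ⟨by linarith, le_rfl⟩
  have cons := aux_cons u v w r T hu hv hw zu zv zw du dv hl
  have hint : ∀ t ∈ Set.Icc 0 T, ∀ p : ℝ → ℝ, ContDiff ℝ 2 p → ∀ ω : EuclideanSpace ℝ (Fin n),
      Integrable (fun x => v t x * p (inner ℝ ω x - t) + u t x * deriv p (inner ℝ ω x - t)) := by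
    intro t ht p hp ω
    have hpc := hp.continuous
    have hpc' := hp.continuous_deriv (by norm_num)
    refine Integrable.add ?_ ?_
    · exact ((aux_slice hv ht).mul (by fun_prop)).integrable_of_hasCompactSupport
        (aux_cs (zv t ht)).mul_right
    · exact ((aux_slice hu ht).mul (by fun_prop)).integrable_of_hasCompactSupport
        (aux_cs (zu t ht)).mul_right
  obtain ⟨β, hβ1, hβ2⟩ : ∃ β, r - T < β ∧ β < -α := exists_between (by linarith)
  obtain ⟨γ, hγ1, hγ2⟩ : ∃ γ, β < γ ∧ γ < -α := exists_between hβ2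
  have stepA : ∀ p : ℝ → ℝ, ContDiff ℝ 2 p → (∀ s, s < β → p s = 0) →
      ∀ ω : EuclideanSpace ℝ (Fin n), ‖ω‖ = 1 → auxQ u v p ω 0 = 0 := by
    intro p hp hz ω hω
    rw [cons p hp ω hω 0 T m0 mT]
    unfold auxQ
    rw [integral_eq_zero_of_ae]
    refine Filter.Eventually.of_forall (fun x => ?_)
    by_cases hx : r < ‖x‖
    · simp [zu T mT x hx, zv T mT x hx]
    · have h1 : inner ℝ ω x ≤ r := by
        have := real_inner_le_norm ω x
        rw [hω, one_mul] at this
        linarith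
      have h2 : inner ℝ ω x - T < β := by linarith
      simp [hz _ h2, aux_deriv_zero hz h2]
  set χ : ℝ → ℝ := fun s => Real.smoothTransition ((s - β) / (γ - β)) with hχ
  have cχ : ContDiff ℝ 2 χ := by
    have : ContDiff ℝ 2 Real.smoothTransition := Real.smoothTransition.contDiff (n := 2)
    exact this.comp ((contDiff_id.sub contDiff_const).div_const _)
  have hγβ : 0 < γ - β := by linarith
  have χ0 : ∀ s, s < β → χ s = 0 := fun s hs =>
    Real.smoothTransition.zero_of_nonpos (div_nonpos_of_nonpos_of_nonneg (by linarith) hγβ.le)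
  have χ1 : ∀ s, γ < s → χ s = 1 := fun s hs =>
    Real.smoothTransition.one_of_one_le (by rw [le_div_iff₀ hγβ]; linarith)
  have stepB : ∀ p : ℝ → ℝ, ContDiff ℝ 2 p →
      ∀ ω : EuclideanSpace ℝ (Fin n), ‖ω‖ = 1 → auxQ u v p ω 0 = 0 := by
    intro p hp ω hω
    set p1 : ℝ → ℝ := fun s => χ s * p s with hp1
    set p2 : ℝ → ℝ := fun s => (1 - χ (-s)) * p (-s) with hp2
    have c1 : ContDiff ℝ 2 p1 := cχ.mul hp
    have c2 : ContDiff ℝ 2 p2 :=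
      (contDiff_const.sub (cχ.comp contDiff_neg)).mul (hp.comp contDiff_neg)
    have z2 : ∀ s, s < -γ → p2 s = 0 := by
      intro s hs
      simp [hp2, χ1 (-s) (by linarith)]
    have q1 := stepA p1 c1 (fun s hs => by simp [hp1, χ0 s hs]) ω hω
    have q2 := stepA p2 c2 (fun s hs => z2 s (by linarith)) (-ω) (by rwa [norm_neg])
    have : auxQ u v p ω 0 = auxQ u v p1 ω 0 + auxQ u v p2 (-ω) 0 := by
      unfold auxQ
      rw [← integral_add (hint 0 m0 p1 c1 ω) (hint 0 m0 p2 c2 (-ω))]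
      congr 1
      ext x
      simp only [inner_neg_left, sub_zero]
      have e1 : p1 (inner ℝ ω x) + p2 (-inner ℝ ω x) = p (inner ℝ ω x) := by
        simp only [hp1, hp2, neg_neg]; ring
      by_cases hx : α ≤ ‖x‖
      · rw [h0 x hx, ← e1]; ring
      · have h1 : -‖x‖ ≤ inner ℝ ω x := by
          have := neg_le_of_abs_le (abs_real_inner_le_norm ω x)
          rwa [hω, one_mul] at this
        have h2 : γ < inner ℝ ω x := by linarith
        have h3 : deriv p2 (-inner ℝ ω x) = 0 := aux_deriv_zero z2 (by linarith)
        have h4 : deriv p1 (inner ℝ ω x) = deriv p (inner ℝ ω x) := by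
          apply Filter.EventuallyEq.deriv_eq
          filter_upwards [Ioi_mem_nhds h2] with s hs
          simp [hp1, χ1 s hs]
        rw [h3, h4, ← e1]; ring
    rw [this, q1, q2, add_zero]
  intro t ht
  have stepC : ∀ p : ℝ → ℝ, ContDiff ℝ 2 p →
      ∀ ω : EuclideanSpace ℝ (Fin n), ‖ω‖ = 1 → auxQ u v p ω t = 0 := by
    intro p hp ω hω
    rw [cons p hp ω hω t 0 ht m0, stepB p hp ω hω]
  refine aux_fourier hn r (u t) (aux_slice hu ht) (zu t ht) ?_
  intro p hp ω hω
  have ca : ContDiff ℝ 2 (fun s => p (s + t)) := hp.comp (contDiff_id.add contDiff_const)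
  have cb : ContDiff ℝ 2 (fun s => p (-(s + t))) :=
    hp.comp (contDiff_id.add contDiff_const).neg
  have qa := stepC _ ca ω hω
  have qb := stepC _ cb (-ω) (by rwa [norm_neg])
  have da : ∀ s, deriv (fun s => p (s + t)) s = deriv p (s + t) := fun s =>
    deriv_comp_add_const p t s
  have db : ∀ s, deriv (fun s => p (-(s + t))) s = - deriv p (-(s + t)) := fun s => by
    rw [deriv_comp_add_const (fun y => p (-y)) t s, deriv_comp_neg]
  have ia := hint t ht _ ca ω
  have ib := hint t ht _ cb (-ω)
  unfold auxQ at qa qb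
  have hsub := integral_sub ia ib
  rw [qa, qb, sub_zero] at hsub
  simp only [da, db, inner_neg_left, sub_add_cancel, neg_neg] at hsub
  have e : ∀ x, v t x * p (inner ℝ ω x) + u t x * deriv p (inner ℝ ω x)
      - (v t x * p (inner ℝ ω x) + u t x * -deriv p (inner ℝ ω x))
      = 2 * (u t x * deriv p (inner ℝ ω x)) := fun x => by ring
  simp_rw [e] at hsub
  rw [integral_const_mul] at hsub
  linarith

lemma aux_td {n : ℕ} {T r : ℝ} (hT : 0 < T) (k : WithTop ℕ∞)
    (g : ℝ → EuclideanSpace ℝ (Fin n) → ℝ)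
    (hg : ContDiffOn ℝ (k + 1) (Function.uncurry g) (Set.Icc 0 T ×ˢ Set.univ))
    (zg : ∀ t ∈ Set.Icc 0 T, ∀ x, r < ‖x‖ → g t x = 0) :
    ∃ g' : ℝ → EuclideanSpace ℝ (Fin n) → ℝ,
      ContDiffOn ℝ k (Function.uncurry g') (Set.Icc 0 T ×ˢ Set.univ) ∧
      (∀ t ∈ Set.Icc 0 T, ∀ x, r < ‖x‖ → g' t x = 0) ∧
      (∀ t ∈ Set.Ioo 0 T, ∀ x, HasDerivAt (fun s => g s x) (g' t x) t) := by
  set S : Set (ℝ × EuclideanSpace ℝ (Fin n)) := Set.Icc 0 T ×ˢ Set.univ with hS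
  have uS : UniqueDiffOn ℝ S := (uniqueDiffOn_Icc hT).prod uniqueDiffOn_univ
  refine ⟨fun t x => fderivWithin ℝ (Function.uncurry g) S (t, x) (1, 0), ?_, ?_, ?_⟩
  · exact (hg.fderivWithin uS le_rfl).clm_apply contDiffOn_const
  · intro t ht x hx
    have hev : Function.uncurry g =ᶠ[nhdsWithin (t, x) S] fun _ => 0 := by
      have ho : {y : ℝ × EuclideanSpace ℝ (Fin n) | r < ‖y.2‖} ∈ nhds (t, x) :=
        (isOpen_lt continuous_const (by fun_prop)).mem_nhds hx
      filter_upwards [self_mem_nhdsWithin, mem_nhdsWithin_of_mem_nhds ho] with y hy1 hy2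
      exact zg y.1 hy1.1 y.2 hy2
    have : fderivWithin ℝ (Function.uncurry g) S (t, x) = 0 := by
      rw [hev.fderivWithin_eq (zg t ht x hx)]
      simp
    simp [this]
  · intro t ht x
    have hn : S ∈ nhds (t, x) := prod_mem_nhds (Icc_mem_nhds ht.1 ht.2) Filter.univ_mem
    have hd : HasFDerivAt (Function.uncurry g) (fderivWithin ℝ (Function.uncurry g) S (t, x))
        (t, x) :=
      ((hg.differentiableOn (by simp)) (t, x)
        ⟨Set.Ioo_subset_Icc_self ht, trivial⟩).hasFDerivWithinAt.hasFDerivAt hn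
    have hc : HasDerivAt (fun s : ℝ => (s, x)) ((1 : ℝ), (0 : EuclideanSpace ℝ (Fin n))) t :=
      (hasDerivAt_id t).prodMk (hasDerivAt_const t x)
    exact hd.comp_hasDerivAt t hc

theorem unique_continuation_ball_localized (n : ℕ) (hn : 1 ≤ n) (ε α T : ℝ)
    (hε0 : 0 < ε) (hε1 : ε < 1) (hα0 : 0 < α) (hα : α < 1 - ε) (hT : 1 + α - ε < T)
    (u : ℝ → EuclideanSpace ℝ (Fin n) → ℝ)
    -- u is of class C² on [0,T] × closure(Ω)
    (hreg : ContDiffOn ℝ 2 (Function.uncurry u)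
      (Set.Icc 0 T ×ˢ Metric.closedBall (0 : EuclideanSpace ℝ (Fin n)) 1))
    -- u solves the wave equation on [0,T] × closure(Ω)
    (hwave : ∀ t ∈ Set.Icc (0 : ℝ) T, ∀ x ∈ Metric.closedBall (0 : EuclideanSpace ℝ (Fin n)) 1,
      pdt (pdt u) t x = lap (u t) x)
    -- Dirichlet boundary conditions
    (hbdry : ∀ t ∈ Set.Icc (0 : ℝ) T, ∀ x : EuclideanSpace ℝ (Fin n), ‖x‖ = 1 → u t x = 0)
    -- initial data supported in the closed ball of radius α
    (hsupp : ∀ x : EuclideanSpace ℝ (Fin n), α ≤ ‖x‖ → ‖x‖ ≤ 1 → u 0 x = 0 ∧ pdt u 0 x = 0)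
    -- ∂ₜu vanishes on the observation set (0,T) × {1 − ε < |x| < 1}
    (hobs : ∀ t ∈ Set.Ioo (0 : ℝ) T, ∀ x : EuclideanSpace ℝ (Fin n),
      1 - ε < ‖x‖ → ‖x‖ < 1 → pdt u t x = 0) :
    ∀ t ∈ Set.Icc (0 : ℝ) T, ∀ x ∈ Metric.closedBall (0 : EuclideanSpace ℝ (Fin n)) 1,
      u t x = 0 := by
  have hTpos : 0 < T := by linarith
  have m0 : (0:ℝ) ∈ Set.Icc 0 T := ⟨le_rfl, hTpos.le⟩
  -- u vanishes on the annulus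
  have hann : ∀ t ∈ Set.Icc (0 : ℝ) T, ∀ x : EuclideanSpace ℝ (Fin n),
      1 - ε < ‖x‖ → ‖x‖ < 1 → u t x = 0 := by
    intro t ht x hx1 hx2
    have hu0 : u 0 x = 0 := (hsupp x (by linarith) hx2.le).1
    rcases ht.1.eq_or_lt with h | h
    · rw [← h]; exact hu0
    have hxm : x ∈ Metric.closedBall (0 : EuclideanSpace ℝ (Fin n)) 1 := by simpa using hx2.le
    have hd : DifferentiableOn ℝ (fun s => u s x) (Set.Icc 0 T) := by
      have : DifferentiableOn ℝ (fun s => Function.uncurry u (s, x)) (Set.Icc 0 T) :=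
        (hreg.differentiableOn (by norm_num)).comp (by fun_prop) (fun s hs => ⟨hs, hxm⟩)
      exact this
    obtain ⟨c, hc, hcs⟩ := exists_deriv_eq_slope (fun s => u s x) h
      (hd.continuousOn.mono (Set.Icc_subset_Icc le_rfl ht.2))
      (hd.mono (Set.Ioo_subset_Icc_self.trans (Set.Icc_subset_Icc le_rfl ht.2)))
    have h1 : deriv (fun s => u s x) c = 0 := hobs c ⟨hc.1, hc.2.trans_le ht.2⟩ x hx1 hx2
    rw [h1, hu0] at hcs
    have : t - 0 ≠ 0 := by linarith
    field_simp at hcs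
    linarith
  -- extension by zero
  set U : ℝ → EuclideanSpace ℝ (Fin n) → ℝ := fun t x => if ‖x‖ < 1 then u t x else 0 with hU
  have Uin : ∀ t x, ‖x‖ < 1 → U t x = u t x := fun t x hx => by simp [hU, hx]
  have Uout : ∀ t x, ¬ ‖x‖ < 1 → U t x = 0 := fun t x hx => by simp only [hU, if_neg hx]
  have zU : ∀ t ∈ Set.Icc 0 T, ∀ x, 1 - ε < ‖x‖ → U t x = 0 := by
    intro t ht x hx
    by_cases h : ‖x‖ < 1
    · rw [Uin t x h]; exact hann t ht x hx h
    · exact Uout t x h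
  have cU : ContDiffOn ℝ 2 (Function.uncurry U) (Set.Icc 0 T ×ˢ Set.univ) := by
    rintro ⟨t, x⟩ ⟨ht, -⟩
    by_cases h : ‖x‖ < 1
    · have ho : {y : ℝ × EuclideanSpace ℝ (Fin n) | ‖y.2‖ < 1} ∈ nhds (t, x) :=
        (isOpen_lt (by fun_prop) continuous_const).mem_nhds h
      have h1 : ContDiffWithinAt ℝ 2 (Function.uncurry u)
          (Set.Icc 0 T ×ˢ Metric.closedBall (0 : EuclideanSpace ℝ (Fin n)) 1) (t, x) :=
        hreg (t, x) ⟨ht, by simpa using h.le⟩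
      have h2 : ContDiffWithinAt ℝ 2 (Function.uncurry u)
          (Set.Icc 0 T ×ˢ Set.univ) (t, x) := by
        refine h1.mono_of_mem_nhdsWithin ?_
        filter_upwards [self_mem_nhdsWithin, mem_nhdsWithin_of_mem_nhds ho] with y hy1 hy2
        exact ⟨hy1.1, by simpa using (le_of_lt hy2)⟩
      refine h2.congr_of_eventuallyEq ?_ (Uin t x h)
      filter_upwards [mem_nhdsWithin_of_mem_nhds ho] with y hy
      exact Uin y.1 y.2 hy
    · have hx : 1 - ε < ‖x‖ := by linarith
      have ho : {y : ℝ × EuclideanSpace ℝ (Fin n) | 1 - ε < ‖y.2‖} ∈ nhds (t, x) :=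
        (isOpen_lt continuous_const (by fun_prop)).mem_nhds hx
      refine (contDiffWithinAt_const (c := (0:ℝ))).congr_of_eventuallyEq ?_ (zU t ht x hx)
      filter_upwards [self_mem_nhdsWithin, mem_nhdsWithin_of_mem_nhds ho] with y hy1 hy2
      exact zU y.1 hy1.1 y.2 hy2
  have cU' : ContDiffOn ℝ (1 + 1) (Function.uncurry U) (Set.Icc 0 T ×ˢ Set.univ) := by
    rw [one_add_one_eq_two]; exact cU
  obtain ⟨V, cV, zV, dU⟩ := aux_td hTpos 1 U cU' zU
  have cV' : ContDiffOn ℝ (0 + 1) (Function.uncurry V) (Set.Icc 0 T ×ˢ Set.univ) := by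
    rw [zero_add]; exact cV
  obtain ⟨W, cW, zW, dV⟩ := aux_td hTpos 0 V cV' zV
  have hl : ∀ t ∈ Set.Ioo 0 T, ContDiff ℝ 2 (U t) ∧ ∀ x, W t x = lap (U t) x := by
    intro t ht
    have htI := Set.Ioo_subset_Icc_self ht
    constructor
    · have : ContDiffOn ℝ 2 (fun x => Function.uncurry U (t, x)) Set.univ :=
        cU.comp (by fun_prop) (fun x _ => ⟨htI, trivial⟩)
      exact contDiffOn_univ.1 this
    intro x
    have hW : pdt (pdt U) t x = W t x := by
      have : (fun s => pdt U s x) =ᶠ[nhds t] fun s => V s x := by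
        filter_upwards [Ioo_mem_nhds ht.1 ht.2] with s hs
        exact (dU s hs x).deriv
      change deriv (fun s => pdt U s x) t = _
      rw [this.deriv_eq]
      exact (dV t ht x).deriv
    rw [← hW]
    by_cases h : ‖x‖ < 1
    · have e1 : pdt (pdt U) t x = pdt (pdt u) t x := by
        simp only [pdt, Uin _ x h]
      have e2 : U t =ᶠ[nhds x] u t := by
        have ho : {y : EuclideanSpace ℝ (Fin n) | ‖y‖ < 1} ∈ nhds x :=
          (isOpen_lt (by fun_prop) continuous_const).mem_nhds h
        filter_upwards [ho] with y hy
        exact Uin t y hy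
      rw [e1, hwave t htI x (by simpa using h.le)]
      simp only [lap, (e2.iteratedFDeriv ℝ 2).eq_of_nhds]
    · have e1 : pdt (pdt U) t x = 0 := by
        simp [pdt, Uout _ x h]
      have e2 : U t =ᶠ[nhds x] fun _ => 0 := by
        have ho : {y : EuclideanSpace ℝ (Fin n) | 1 - ε < ‖y‖} ∈ nhds x :=
          (isOpen_lt continuous_const (by fun_prop)).mem_nhds (by simp only [Set.mem_setOf_eq]; linarith)
        filter_upwards [ho] with y hy
        exact zU t htI y hy
      rw [e1]
      simp only [lap, (e2.iteratedFDeriv ℝ 2).eq_of_nhds, iteratedFDeriv_two_apply]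
      simp
  have h0 : ∀ x, α ≤ ‖x‖ → U 0 x = 0 := by
    intro x hx
    by_cases h : ‖x‖ < 1
    · rw [Uin 0 x h]; exact (hsupp x hx h.le).1
    · exact Uout 0 x h
  have fin := aux_core hn U V W (1 - ε) T α hα0 (by linarith) (by linarith) cU.continuousOn
    cV.continuousOn cW.continuousOn zU zV zW dU dV hl h0
  intro t ht x hx
  have hx' : ‖x‖ ≤ 1 := by simpa using hx
  rcases hx'.lt_or_eq with h | h
  · rw [← Uin t x h, fin t ht]; rfl
  · exact hbdry t ht x h
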